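/- Let p be an odd prime and let G be a group of order p³ with elements a, b, c satisfying aᵖ = bᵖ = cᵖ = 1, ab = bac, ca = ac, cb = bc, c ≠ 1, and G = ⟨a, b⟩. Put α = a, β = b and γ = b⁻¹a⁻¹. Then α, β, γ are non-identity elements with αβγ = 1, the cyclic subgroups ⟨α⟩, ⟨β⟩, ⟨γ⟩ pairwise intersect trivially, and ⟨α, β, γ⟩ = G; consequently, setting A = ⟨α⟩, B = ⟨β⟩, C = ⟨γ⟩, the pair (T°, T⋆) with T° = {(gA, gB, gC) : g ∈ G} and T⋆ = {(gA, gB, gα⁻¹C) : g ∈ G} is a primary, p-homogeneous latin bitrade of size p³. -/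

import Mathlib

/-!
The bitrade is an instance of a general construction. Let `x * y * z = 1` with `x ≠ 1` and the
cyclic groups `X = ⟨x⟩`, `Y = ⟨y⟩`, `Z = ⟨z⟩` pairwise intersecting trivially. Two cosets of
different subgroups then share at most one element, so any two coordinates of `(gX, gY, gZ)`
determine `g`. The triple `(gX, gY, gx⁻¹Z)` of `T⋆` agrees with the triple of `T°` at `g` in
coordinates 1, 2, with the one at `g * x⁻¹` in coordinates 1, 3, and with the one at `g * y` in
coordinates 2, 3 (because `x⁻¹ = y * z`). This gives the bitrade conditions
(`isBitrade_of_inf_eq_bot`). It also shows that the set of `g` indexing a sub-bitrade is closed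
under right multiplication by `x`, `x⁻¹`, `y`, `y⁻¹`, so it is everything as soon as `x` and `y`
generate the group (`isPrimary_of_closure`). The triples with a prescribed coordinate are indexed
by a coset, so homogeneity is a statement about the orders of `x`, `y`, `z`.

In the group at hand, `a`, `b`, `b⁻¹ * a⁻¹` pairwise do not commute, since `c ≠ 1`. They all have
`p`-th power `1`; for the third this follows from `(b * a) ^ n = b ^ n * a ^ n * c ^ (n.choose 2)`
and `p ∣ p.choose 2`, where `p` odd is used. Non-commuting elements with trivial `p`-th power
generate subgroups of order `p` with trivial intersection.
-/

section LatinDefs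

variable {A₁ A₂ A₃ : Type*}

/-- A partial latin square: two triples agreeing in at least two coordinates are equal
(i.e. two distinct triples agree in at most one coordinate). -/
def IsPLS (T : Set (A₁ × A₂ × A₃)) : Prop :=
  ∀ t ∈ T, ∀ t' ∈ T,
    ((t.1 = t'.1 ∧ t.2.1 = t'.2.1) → t = t') ∧
    ((t.1 = t'.1 ∧ t.2.2 = t'.2.2) → t = t') ∧
    ((t.2.1 = t'.2.1 ∧ t.2.2 = t'.2.2) → t = t')

/-- Conditions (R2)/(R3): for each triple of `T` and each pair of coordinates there is a
unique triple of `T'` agreeing with it in those two coordinates. -/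
def BitradeCond (T T' : Set (A₁ × A₂ × A₃)) : Prop :=
  ∀ t ∈ T,
    (∃! t', t' ∈ T' ∧ t'.1 = t.1 ∧ t'.2.1 = t.2.1) ∧
    (∃! t', t' ∈ T' ∧ t'.1 = t.1 ∧ t'.2.2 = t.2.2) ∧
    (∃! t', t' ∈ T' ∧ t'.2.1 = t.2.1 ∧ t'.2.2 = t.2.2)

/-- A latin bitrade: a pair of disjoint nonempty partial latin squares satisfying
(R1), (R2), (R3). -/
def IsBitrade (T T' : Set (A₁ × A₂ × A₃)) : Prop :=
  T.Nonempty ∧ T'.Nonempty ∧ IsPLS T ∧ IsPLS T' ∧ Disjoint T T' ∧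
  BitradeCond T T' ∧ BitradeCond T' T

/-- A latin bitrade is primary if its only sub-bitrade is itself. -/
def IsPrimary (T T' : Set (A₁ × A₂ × A₃)) : Prop :=
  ∀ U U' : Set (A₁ × A₂ × A₃), IsBitrade U U' → U ⊆ T → U' ⊆ T' → U = T ∧ U' = T'

/-- A latin trade `T` is minimal if any latin trade contained in it equals it. -/
def IsMinimalTrade (T : Set (A₁ × A₂ × A₃)) : Prop :=
  ∀ U U' : Set (A₁ × A₂ × A₃), IsBitrade U U' → U ⊆ T → U = T

/-- Thinness: if `i ∘ j = i' ∘ j'` with `i ≠ i'`, `j ≠ j'`, then `i ⋆ j'` is undefined or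
equals `i ∘ j`. -/
def IsThin (T T' : Set (A₁ × A₂ × A₃)) : Prop :=
  ∀ i i' j j' k, (i, j, k) ∈ T → (i', j', k) ∈ T → i ≠ i' → j ≠ j' →
    ∀ k', (i, j', k') ∈ T' → k' = k

/-- Orthogonality: if `i ∘ j = i' ∘ j'` with `i ≠ i'`, `j ≠ j'`, and both `i ⋆ j`,
`i' ⋆ j'` are defined, then `i ⋆ j ≠ i' ⋆ j'`. -/
def IsOrthogonal (T T' : Set (A₁ × A₂ × A₃)) : Prop :=
  ∀ i i' j j' k, (i, j, k) ∈ T → (i', j', k) ∈ T → i ≠ i' → j ≠ j' →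
    ∀ k₁ k₂, (i, j, k₁) ∈ T' → (i', j', k₂) ∈ T' → k₁ ≠ k₂

/-- `k`-homogeneity: every occurring row, column and symbol appears in exactly `k` triples. -/
def IsHomogeneous (T : Set (A₁ × A₂ × A₃)) (k : ℕ) : Prop :=
  (∀ i, (∃ t ∈ T, t.1 = i) → {t ∈ T | t.1 = i}.ncard = k) ∧
  (∀ j, (∃ t ∈ T, t.2.1 = j) → {t ∈ T | t.2.1 = j}.ncard = k) ∧
  (∀ s, (∃ t ∈ T, t.2.2 = s) → {t ∈ T | t.2.2 = s}.ncard = k)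

end LatinDefs

/-- The latin trade `T° = {(gA, gB, gC) : g ∈ G}` built from a group `G` and elements
`a`, `b`, `c`, where `A = ⟨a⟩`, `B = ⟨b⟩`, `C = ⟨c⟩` and `gH` denotes a left coset. -/
def Tcirc (G : Type*) [Group G] (a b c : G) :
    Set ((G ⧸ Subgroup.zpowers a) × (G ⧸ Subgroup.zpowers b) × (G ⧸ Subgroup.zpowers c)) :=
  {t | ∃ g : G, t = (QuotientGroup.mk g, QuotientGroup.mk g, QuotientGroup.mk g)}

/-- The disjoint mate `T⋆ = {(gA, gB, ga⁻¹C) : g ∈ G}`. -/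
def Tstar (G : Type*) [Group G] (a b c : G) :
    Set ((G ⧸ Subgroup.zpowers a) × (G ⧸ Subgroup.zpowers b) × (G ⧸ Subgroup.zpowers c)) :=
  {t | ∃ g : G, t = (QuotientGroup.mk g, QuotientGroup.mk g, QuotientGroup.mk (g * a⁻¹))}

section General

variable {G : Type*} [Group G] {x y z : G}

/-- Elements lying in the same left cosets of two subgroups with trivial intersection agree. -/
lemma eq_of_mk_eq_mk {H K : Subgroup G} (h : H ⊓ K = ⊥) {g k : G}
    (h₁ : (g : G ⧸ H) = k) (h₂ : (g : G ⧸ K) = k) : g = k := by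
  have hm : g⁻¹ * k ∈ H ⊓ K := ⟨QuotientGroup.eq.1 h₁, QuotientGroup.eq.1 h₂⟩
  rw [h, Subgroup.mem_bot] at hm
  exact inv_mul_eq_one.1 hm

lemma mk_mul_inv_self (g : G) : ((g * x⁻¹ : G) : G ⧸ Subgroup.zpowers x) = g :=
  QuotientGroup.mk_mul_of_mem g (inv_mem (Subgroup.mem_zpowers x))

lemma mk_mul_self (g : G) : ((g * x : G) : G ⧸ Subgroup.zpowers x) = g :=
  QuotientGroup.mk_mul_of_mem g (Subgroup.mem_zpowers x)

/-- The identity `x⁻¹ = y * z` moves the third coordinate of `T⋆` from `g * x⁻¹` to `g * y`. -/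
lemma mk_mul_inv_eq_mk_mul (hxyz : x * y * z = 1) (g : G) :
    ((g * x⁻¹ : G) : G ⧸ Subgroup.zpowers z) = (g * y : G) := by
  have h : x⁻¹ = y * z := by
    rw [inv_eq_iff_mul_eq_one, ← mul_assoc, hxyz]
  rw [h, ← mul_assoc, mk_mul_self]

lemma Tcirc_isPLS (hxy : Subgroup.zpowers x ⊓ Subgroup.zpowers y = ⊥)
    (hxz : Subgroup.zpowers x ⊓ Subgroup.zpowers z = ⊥)
    (hyz : Subgroup.zpowers y ⊓ Subgroup.zpowers z = ⊥) : IsPLS (Tcirc G x y z) := by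
  rintro _ ⟨g, rfl⟩ _ ⟨k, rfl⟩
  refine ⟨fun h => ?_, fun h => ?_, fun h => ?_⟩
  · rw [eq_of_mk_eq_mk hxy h.1 h.2]
  · rw [eq_of_mk_eq_mk hxz h.1 h.2]
  · rw [eq_of_mk_eq_mk hyz h.1 h.2]

lemma Tstar_isPLS (hxyz : x * y * z = 1)
    (hxy : Subgroup.zpowers x ⊓ Subgroup.zpowers y = ⊥)
    (hxz : Subgroup.zpowers x ⊓ Subgroup.zpowers z = ⊥)
    (hyz : Subgroup.zpowers y ⊓ Subgroup.zpowers z = ⊥) : IsPLS (Tstar G x y z) := by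
  rintro _ ⟨g, rfl⟩ _ ⟨k, rfl⟩
  refine ⟨fun h => ?_, fun h => ?_, fun h => ?_⟩
  · rw [eq_of_mk_eq_mk hxy h.1 h.2]
  · have e : g * x⁻¹ = k * x⁻¹ :=
      eq_of_mk_eq_mk hxz (by rw [mk_mul_inv_self, mk_mul_inv_self]; exact h.1) h.2
    rw [mul_right_cancel e]
  · have e : g * y = k * y :=
      eq_of_mk_eq_mk hyz (by rw [mk_mul_self, mk_mul_self]; exact h.1)
        (by rw [← mk_mul_inv_eq_mk_mul hxyz, ← mk_mul_inv_eq_mk_mul hxyz]; exact h.2)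
    rw [mul_right_cancel e]

/-- In a partial latin square, existence of a match in each pair of coordinates suffices for the
bitrade condition. -/
lemma bitradeCond_of_exists {A₁ A₂ A₃ : Type*} {T T' : Set (A₁ × A₂ × A₃)} (hT' : IsPLS T')
    (h : ∀ t ∈ T, (∃ t' ∈ T', t'.1 = t.1 ∧ t'.2.1 = t.2.1) ∧
      (∃ t' ∈ T', t'.1 = t.1 ∧ t'.2.2 = t.2.2) ∧
      (∃ t' ∈ T', t'.2.1 = t.2.1 ∧ t'.2.2 = t.2.2)) : BitradeCond T T' := by
  intro t ht
  obtain ⟨⟨u, hu, h1⟩, ⟨v, hv, h2⟩, ⟨w, hw, h3⟩⟩ := h t ht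
  refine ⟨⟨u, ⟨hu, h1⟩, fun s hs => ?_⟩, ⟨v, ⟨hv, h2⟩, fun s hs => ?_⟩,
    ⟨w, ⟨hw, h3⟩, fun s hs => ?_⟩⟩
  · exact (hT' s hs.1 u hu).1 ⟨hs.2.1.trans h1.1.symm, hs.2.2.trans h1.2.symm⟩
  · exact (hT' s hs.1 v hv).2.1 ⟨hs.2.1.trans h2.1.symm, hs.2.2.trans h2.2.symm⟩
  · exact (hT' s hs.1 w hw).2.2 ⟨hs.2.1.trans h3.1.symm, hs.2.2.trans h3.2.symm⟩

theorem isBitrade_of_inf_eq_bot (hxyz : x * y * z = 1) (hx : x ≠ 1)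
    (hxy : Subgroup.zpowers x ⊓ Subgroup.zpowers y = ⊥)
    (hxz : Subgroup.zpowers x ⊓ Subgroup.zpowers z = ⊥)
    (hyz : Subgroup.zpowers y ⊓ Subgroup.zpowers z = ⊥) :
    IsBitrade (Tcirc G x y z) (Tstar G x y z) := by
  refine ⟨⟨_, 1, rfl⟩, ⟨_, 1, rfl⟩, Tcirc_isPLS hxy hxz hyz, Tstar_isPLS hxyz hxy hxz hyz,
    ?_, ?_, ?_⟩
  · rw [Set.disjoint_left]
    rintro _ ⟨g, rfl⟩ ⟨k, hk⟩
    simp only [Prod.mk.injEq] at hk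
    obtain rfl := eq_of_mk_eq_mk hxy hk.1 hk.2.1
    -- A common triple would put `g` and `g * x⁻¹` into one coset of `⟨x⟩` and one of `⟨z⟩`.
    have e : g = g * x⁻¹ := eq_of_mk_eq_mk hxz (mk_mul_inv_self g).symm hk.2.2
    exact hx (by simpa using e)
  · refine bitradeCond_of_exists (Tstar_isPLS hxyz hxy hxz hyz) ?_
    rintro _ ⟨g, rfl⟩
    refine ⟨⟨_, ⟨g, rfl⟩, rfl, rfl⟩, ⟨_, ⟨g * x, rfl⟩, mk_mul_self g, ?_⟩,
      ⟨_, ⟨g * y⁻¹, rfl⟩, mk_mul_inv_self g, ?_⟩⟩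
    · simp
    · simp [mk_mul_inv_eq_mk_mul hxyz]
  · refine bitradeCond_of_exists (Tcirc_isPLS hxy hxz hyz) ?_
    rintro _ ⟨g, rfl⟩
    exact ⟨⟨_, ⟨g, rfl⟩, rfl, rfl⟩, ⟨_, ⟨g * x⁻¹, rfl⟩, mk_mul_inv_self g, rfl⟩,
      ⟨_, ⟨g * y, rfl⟩, mk_mul_self g, (mk_mul_inv_eq_mk_mul hxyz g).symm⟩⟩

theorem isPrimary_of_closure (hxyz : x * y * z = 1)
    (hxy : Subgroup.zpowers x ⊓ Subgroup.zpowers y = ⊥)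
    (hxz : Subgroup.zpowers x ⊓ Subgroup.zpowers z = ⊥)
    (hyz : Subgroup.zpowers y ⊓ Subgroup.zpowers z = ⊥)
    (hgen : Subgroup.closure {x, y} = ⊤) :
    IsPrimary (Tcirc G x y z) (Tstar G x y z) := by
  rintro U U' ⟨⟨t₀, ht₀⟩, -, -, -, -, hUU', hU'U⟩ hU hU'
  let f : G → (G ⧸ Subgroup.zpowers x) × (G ⧸ Subgroup.zpowers y) × (G ⧸ Subgroup.zpowers z) :=
    fun g => (g, g, g)
  let f' : G → (G ⧸ Subgroup.zpowers x) × (G ⧸ Subgroup.zpowers y) × (G ⧸ Subgroup.zpowers z) :=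
    fun g => (g, g, (g * x⁻¹ : G))
  have h12 : ∀ g, f g ∈ U → f' g ∈ U' := by
    intro g hg
    obtain ⟨t, ⟨ht, h1, h2⟩, -⟩ := (hUU' _ hg).1
    obtain ⟨k, rfl⟩ := hU' ht
    rwa [eq_of_mk_eq_mk hxy h1 h2] at ht
  have h13 : ∀ g, f g ∈ U → f' (g * x) ∈ U' := by
    intro g hg
    obtain ⟨t, ⟨ht, h1, h2⟩, -⟩ := (hUU' _ hg).2.1
    obtain ⟨k, rfl⟩ := hU' ht
    have e : k * x⁻¹ = g := eq_of_mk_eq_mk hxz ((mk_mul_inv_self k).trans h1) h2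
    rwa [mul_inv_eq_iff_eq_mul.1 e] at ht
  have h23 : ∀ g, f g ∈ U → f' (g * y⁻¹) ∈ U' := by
    intro g hg
    obtain ⟨t, ⟨ht, h1, h2⟩, -⟩ := (hUU' _ hg).2.2
    obtain ⟨k, rfl⟩ := hU' ht
    have e : k * y = g := eq_of_mk_eq_mk hyz ((mk_mul_self k).trans h1)
      ((mk_mul_inv_eq_mk_mul hxyz k).symm.trans h2)
    rwa [eq_mul_inv_of_mul_eq e] at ht
  have h12' : ∀ g, f' g ∈ U' → f g ∈ U := by
    intro g hg
    obtain ⟨t, ⟨ht, h1, h2⟩, -⟩ := (hU'U _ hg).1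
    obtain ⟨k, rfl⟩ := hU ht
    rwa [eq_of_mk_eq_mk hxy h1 h2] at ht
  have h13' : ∀ g, f' g ∈ U' → f (g * x⁻¹) ∈ U := by
    intro g hg
    obtain ⟨t, ⟨ht, h1, h2⟩, -⟩ := (hU'U _ hg).2.1
    obtain ⟨k, rfl⟩ := hU ht
    have e : k = g * x⁻¹ := eq_of_mk_eq_mk hxz (h1.trans (mk_mul_inv_self g).symm) h2
    rwa [e] at ht
  have h23' : ∀ g, f' g ∈ U' → f (g * y) ∈ U := by
    intro g hg
    obtain ⟨t, ⟨ht, h1, h2⟩, -⟩ := (hU'U _ hg).2.2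
    obtain ⟨k, rfl⟩ := hU ht
    have e : k = g * y := eq_of_mk_eq_mk hyz (h1.trans (mk_mul_self g).symm)
      (h2.trans (mk_mul_inv_eq_mk_mul hxyz g))
    rwa [e] at ht
  obtain ⟨g₀, rfl⟩ := hU ht₀
  have hmul : ∀ k : G, f (g₀ * k) ∈ U := by
    intro k
    have hk : k ∈ Subgroup.closure {x, y} := by rw [hgen]; trivial
    induction hk using Subgroup.closure_induction_right with
    | one => rw [mul_one]; exact ht₀
    | mul_right k hk s hs ih =>
      rw [← mul_assoc]
      rcases hs with rfl | rfl
      · exact h12' _ (h13 _ ih)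
      · exact h23' _ (h12 _ ih)
    | mul_inv_cancel k hk s hs ih =>
      rw [← mul_assoc]
      rcases hs with rfl | rfl
      · exact h13' _ (h12 _ ih)
      · exact h12' _ (h23 _ ih)
  have hall : ∀ g : G, f g ∈ U := fun g => by simpa using hmul (g₀⁻¹ * g)
  refine ⟨hU.antisymm ?_, hU'.antisymm ?_⟩
  · rintro _ ⟨g, rfl⟩
    exact hall g
  · rintro _ ⟨g, rfl⟩
    exact h12 g (hall g)

lemma ncard_mk_eq (x g : G) :
    {k : G | (k : G ⧸ Subgroup.zpowers x) = g}.ncard = orderOf x := by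
  have h : {k : G | (k : G ⧸ Subgroup.zpowers x) = g}
      = (fun s => g * s) '' (Subgroup.zpowers x : Set G) := by
    ext k
    simp only [Set.mem_ofPred_eq, Set.mem_image, SetLike.mem_coe]
    rw [eq_comm, QuotientGroup.eq]
    exact ⟨fun hk => ⟨_, hk, by simp⟩, by rintro ⟨s, hs, rfl⟩; simpa using hs⟩
  rw [h, Set.ncard_image_of_injective _ (mul_right_injective g), ← Nat.card_zpowers]
  rfl

lemma mk_triple_injective (hxy : Subgroup.zpowers x ⊓ Subgroup.zpowers y = ⊥) :
    Function.Injective (fun g : G => ((g : G ⧸ Subgroup.zpowers x),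
      (g : G ⧸ Subgroup.zpowers y), (g : G ⧸ Subgroup.zpowers z))) := by
  intro g k h
  simp only [Prod.mk.injEq] at h
  exact eq_of_mk_eq_mk hxy h.1 h.2.1

lemma Tcirc_ncard (hxy : Subgroup.zpowers x ⊓ Subgroup.zpowers y = ⊥) :
    (Tcirc G x y z).ncard = Nat.card G := by
  rw [← Set.ncard_univ, ← Set.ncard_image_of_injective Set.univ (mk_triple_injective (z := z) hxy)]
  congr 1
  ext t
  simp [Tcirc, eq_comm]

/-- The triples of `T°` satisfying a condition are counted by their indices in the group. -/
lemma Tcirc_sep_ncard (hxy : Subgroup.zpowers x ⊓ Subgroup.zpowers y = ⊥)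
    (P : (G ⧸ Subgroup.zpowers x) × (G ⧸ Subgroup.zpowers y) × (G ⧸ Subgroup.zpowers z) → Prop) :
    {t ∈ Tcirc G x y z | P t}.ncard = {g : G | P (g, g, g)}.ncard := by
  rw [← Set.ncard_image_of_injective _ (mk_triple_injective (z := z) hxy)]
  congr 1
  ext t
  constructor
  · rintro ⟨⟨g, rfl⟩, hP⟩
    exact ⟨g, hP, rfl⟩
  · rintro ⟨g, hP, rfl⟩
    exact ⟨⟨g, rfl⟩, hP⟩

theorem Tcirc_isHomogeneous {n : ℕ} (hxy : Subgroup.zpowers x ⊓ Subgroup.zpowers y = ⊥)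
    (hx : orderOf x = n) (hy : orderOf y = n) (hz : orderOf z = n) :
    IsHomogeneous (Tcirc G x y z) n := by
  refine ⟨?_, ?_, ?_⟩
  · rintro _ ⟨_, ⟨g, rfl⟩, rfl⟩
    rw [Tcirc_sep_ncard hxy, ← hx]
    exact ncard_mk_eq x g
  · rintro _ ⟨_, ⟨g, rfl⟩, rfl⟩
    rw [Tcirc_sep_ncard hxy, ← hy]
    exact ncard_mk_eq y g
  · rintro _ ⟨_, ⟨g, rfl⟩, rfl⟩
    rw [Tcirc_sep_ncard hxy, ← hz]
    exact ncard_mk_eq z g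

/-- A nontrivial element of the intersection would generate `⟨x⟩`, which has prime order, making
`x` a power of `y`, so that `x` and `y` would commute. -/
lemma zpowers_inf_eq_bot_of_not_commute {p : ℕ} (hp : p.Prime) (hx : x ^ p = 1)
    (h : ¬ Commute x y) : Subgroup.zpowers x ⊓ Subgroup.zpowers y = ⊥ := by
  rw [eq_bot_iff]
  rintro w ⟨hwx, hwy⟩
  rw [Subgroup.mem_bot]
  by_contra hw
  apply h
  obtain ⟨k, rfl⟩ := Subgroup.mem_zpowers_iff.1 hwx
  obtain ⟨l, hl⟩ := Subgroup.mem_zpowers_iff.1 hwy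
  have hpk : ¬ (p : ℤ) ∣ k := by
    rintro ⟨m, rfl⟩
    exact hw (by rw [zpow_mul, zpow_natCast, hx, one_zpow])
  have hcop : IsCoprime (p : ℤ) k :=
    ((Nat.prime_iff_prime_int.1 hp).coprime_iff_not_dvd).2 hpk
  obtain ⟨u, v, huv⟩ := hcop
  -- Bézout: `x = x ^ (u * p + v * k) = (x ^ k) ^ v`, a power of `y`.
  have hxv : x = y ^ (l * v) := by
    calc x = x ^ (u * p + v * k) := by rw [huv, zpow_one]
      _ = (x ^ k) ^ v := by
        rw [zpow_add, mul_comm u, zpow_mul, zpow_natCast, hx, one_zpow, one_mul, mul_comm v,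
          zpow_mul]
      _ = y ^ (l * v) := by rw [← hl, zpow_mul]
  rw [hxv]
  exact (Commute.refl y).zpow_left _

lemma mul_pow_eq_of_commutator {a b c : G} (hab : a * b = b * a * c) (hca : Commute c a)
    (hcb : Commute c b) (n : ℕ) : (b * a) ^ n = b ^ n * a ^ n * c ^ (n.choose 2) := by
  have hpow : ∀ n : ℕ, a ^ n * b = b * a ^ n * c ^ n := by
    intro n
    induction n with
    | zero => simp
    | succ n ih =>
      calc a ^ (n + 1) * b = a * (a ^ n * b) := by rw [pow_succ', mul_assoc]
        _ = (a * b) * a ^ n * c ^ n := by rw [ih]; simp only [mul_assoc]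
        _ = b * a * (c * a ^ n) * c ^ n := by rw [hab]; simp only [mul_assoc]
        _ = b * a * (a ^ n * c) * c ^ n := by rw [(hca.pow_right n).eq]
        _ = b * a ^ (n + 1) * c ^ (n + 1) := by
          rw [pow_succ' a, pow_succ' c]; simp only [mul_assoc]
  induction n with
  | zero => simp
  | succ n ih =>
    have hcc : Commute (c ^ n.choose 2) (b * a) := (hcb.mul_right hca).pow_left _
    calc (b * a) ^ (n + 1) = b ^ n * a ^ n * (c ^ n.choose 2 * (b * a)) := by
          rw [pow_succ, ih]; simp only [mul_assoc]
      _ = b ^ n * (a ^ n * b) * a * c ^ n.choose 2 := by rw [hcc.eq]; simp only [mul_assoc]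
      _ = b ^ n * b * a ^ n * (c ^ n * a) * c ^ n.choose 2 := by
          rw [hpow]; simp only [mul_assoc]
      _ = b ^ (n + 1) * a ^ (n + 1) * c ^ ((n + 1).choose 2) := by
          rw [(hca.pow_left n).eq, Nat.choose_succ_succ' n 1, Nat.choose_one_right, pow_add c,
            pow_succ b, pow_succ a]
          simp only [mul_assoc]

end General

/-- For the nonabelian group of order `p³` and exponent `p`, the elements `α = a`,
`β = b`, `γ = b⁻¹a⁻¹` are non-identity, satisfy `αβγ = 1`, generate `G`, their cyclic
subgroups pairwise intersect trivially, and the resulting pair `(T°, T⋆)` is a primary,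
`p`-homogeneous latin bitrade of size `p³`. -/
theorem statement11 {G : Type*} [Group G] (p : ℕ) (hp : p.Prime) (hodd : Odd p)
    (hcard : Nat.card G = p ^ 3)
    (a b c : G) (hap : a ^ p = 1) (hbp : b ^ p = 1) (hcp : c ^ p = 1)
    (hab : a * b = b * a * c) (hca : c * a = a * c) (hcb : c * b = b * c)
    (hc : c ≠ 1) (hgen : Subgroup.closure {a, b} = ⊤) :
    (a ≠ 1 ∧ b ≠ 1 ∧ b⁻¹ * a⁻¹ ≠ 1) ∧
    a * b * (b⁻¹ * a⁻¹) = 1 ∧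
    Subgroup.zpowers a ⊓ Subgroup.zpowers b = ⊥ ∧
    Subgroup.zpowers a ⊓ Subgroup.zpowers (b⁻¹ * a⁻¹) = ⊥ ∧
    Subgroup.zpowers b ⊓ Subgroup.zpowers (b⁻¹ * a⁻¹) = ⊥ ∧
    Subgroup.closure {a, b, b⁻¹ * a⁻¹} = ⊤ ∧
    IsBitrade (Tcirc G a b (b⁻¹ * a⁻¹)) (Tstar G a b (b⁻¹ * a⁻¹)) ∧
    IsPrimary (Tcirc G a b (b⁻¹ * a⁻¹)) (Tstar G a b (b⁻¹ * a⁻¹)) ∧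
    IsHomogeneous (Tcirc G a b (b⁻¹ * a⁻¹)) p ∧
    (Tcirc G a b (b⁻¹ * a⁻¹)).ncard = p ^ 3 := by
  have hncomm : ¬ Commute a b := fun h => hc (by
    have h' : b * a * 1 = b * a * c := by rw [mul_one, ← hab]; exact h.eq.symm
    exact (mul_left_cancel h').symm)
  have hnac : ¬ Commute a (b⁻¹ * a⁻¹) := fun h => hncomm (by
    have h' := h.inv_right
    rw [mul_inv_rev, inv_inv, inv_inv] at h'
    simpa using ((Commute.refl a).inv_right).mul_right h')
  have hnbc : ¬ Commute b (b⁻¹ * a⁻¹) := fun h => hncomm (by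
    have h' := h.inv_right
    rw [mul_inv_rev, inv_inv, inv_inv] at h'
    simpa using (h'.mul_right ((Commute.refl b).inv_right)).symm)
  have ha : a ≠ 1 := by rintro rfl; exact hncomm (Commute.one_left b)
  have hb : b ≠ 1 := by rintro rfl; exact hncomm (Commute.one_right a)
  have hg : b⁻¹ * a⁻¹ ≠ 1 := fun h => hnac (by rw [h]; exact Commute.one_right a)
  have hgp : (b⁻¹ * a⁻¹) ^ p = 1 := by
    have h2p : 2 < p := lt_of_le_of_ne hp.two_le (by rintro rfl; exact absurd hodd (by decide))
    obtain ⟨m, hm⟩ := hp.dvd_choose_self two_ne_zero h2p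
    have hcba : Commute (b * a) c := (Commute.mul_right hcb hca).symm
    rw [← mul_inv_rev, inv_pow, hab, hcba.mul_pow, mul_pow_eq_of_commutator hab hca hcb, hap, hbp,
      hm, pow_mul, hcp]
    simp
  have hxyz : a * b * (b⁻¹ * a⁻¹) = 1 := by group
  have hAB := zpowers_inf_eq_bot_of_not_commute hp hap hncomm
  have hAC := zpowers_inf_eq_bot_of_not_commute hp hap hnac
  have hBC := zpowers_inf_eq_bot_of_not_commute hp hbp hnbc
  have : Fact p.Prime := ⟨hp⟩
  refine ⟨⟨ha, hb, hg⟩, hxyz, hAB, hAC, hBC, ?_,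
    isBitrade_of_inf_eq_bot hxyz ha hAB hAC hBC, isPrimary_of_closure hxyz hAB hAC hBC hgen,
    Tcirc_isHomogeneous hAB (orderOf_eq_prime hap ha) (orderOf_eq_prime hbp hb)
      (orderOf_eq_prime hgp hg), (Tcirc_ncard hAB).trans hcard⟩
  rw [eq_top_iff, ← hgen]
  exact Subgroup.closure_mono (by intro s; simp only [Set.mem_insert_iff]; tauto)
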